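/- Let l, m be positive integers with l ≤ m. Then f([l,m]) = Σ_{d=1}^{m} μ(d) · (2^{⌊m/d⌋ − ⌊(l−1)/d⌋} − 1). -/

import Mathlib

/-!
Sieve by the gcd: writing `[gcd X = 1] = ∑_{d ∣ gcd X} μ(d)` and exchanging the sums, the
relatively prime sets are counted by the nonempty sets `X` with `d ∣ gcd X`, each weighted by
`μ(d)`. These are exactly the nonempty sets of multiples of `d`, and an interval `(a, b]` contains
`⌊b/d⌋ - ⌊a/d⌋` of those.
-/

open Finset
open scoped ArithmeticFunction.Moebius

theorem sum_divisors_moebius (n : ℕ) : ∑ d ∈ n.divisors, μ d = if n = 1 then 1 else 0 := by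
  rw [← ArithmeticFunction.coe_mul_zeta_apply, ArithmeticFunction.moebius_mul_coe_zeta,
    ArithmeticFunction.one_apply]

theorem divisors_eq_filter_dvd_Icc {n N : ℕ} (hn : n ∈ Icc 1 N) :
    n.divisors = {d ∈ Icc 1 N | d ∣ n} := by
  obtain ⟨hpos, hle⟩ := mem_Icc.1 hn
  ext d
  simp only [Nat.mem_divisors, mem_filter, mem_Icc]
  exact ⟨fun ⟨hd, _⟩ => ⟨⟨Nat.pos_of_dvd_of_pos hd hpos, (Nat.le_of_dvd hpos hd).trans hle⟩, hd⟩,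
    fun ⟨_, hd⟩ => ⟨hd, Nat.ne_of_gt hpos⟩⟩

theorem card_filter_eq_one_eq_sum_moebius {ι : Type*} {s : Finset ι} {g : ι → ℕ} {N : ℕ}
    (hg : ∀ i ∈ s, g i ∈ Icc 1 N) :
    (#{i ∈ s | g i = 1} : ℤ) = ∑ d ∈ Icc 1 N, μ d * #{i ∈ s | d ∣ g i} := by
  calc (#{i ∈ s | g i = 1} : ℤ)
      = ∑ i ∈ s, if g i = 1 then 1 else 0 := (sum_boole _ _).symm
    _ = ∑ i ∈ s, ∑ d ∈ Icc 1 N, if d ∣ g i then μ d else 0 :=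
        sum_congr rfl fun i hi => by
          rw [← sum_divisors_moebius, divisors_eq_filter_dvd_Icc (hg i hi), sum_filter]
    _ = ∑ d ∈ Icc 1 N, ∑ i ∈ s, if d ∣ g i then μ d else 0 := sum_comm
    _ = ∑ d ∈ Icc 1 N, μ d * #{i ∈ s | d ∣ g i} :=
        sum_congr rfl fun d _ => by
          rw [← sum_filter, sum_const, nsmul_eq_mul, mul_comm]

theorem card_nonempty_subsets_dvd_gcd {ι α : Type*} [CommMonoidWithZero α]
    [NormalizedGCDMonoid α] (s : Finset ι) (f : ι → α) (d : α) [DecidablePred (d ∣ ·)] :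
    #{X ∈ s.powerset | X.Nonempty ∧ d ∣ X.gcd f} = 2 ^ #{i ∈ s | d ∣ f i} - 1 := by
  classical
  have eq_subsets_of_multiples : {X ∈ s.powerset | X.Nonempty ∧ d ∣ X.gcd f}
      = ({i ∈ s | d ∣ f i} : Finset ι).powerset.erase ∅ := by
    ext X
    simp only [mem_filter, mem_powerset, mem_erase, Finset.dvd_gcd_iff, nonempty_iff_ne_empty,
      subset_iff, forall_and]
    tauto
  rw [eq_subsets_of_multiples, card_erase_of_mem (empty_mem_powerset _), card_powerset]

theorem gcd_mem_Icc_one {ι : Type*} {s : Finset ι} {f : ι → ℕ} {N : ℕ} (hs : s.Nonempty)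
    (hf : ∀ i ∈ s, f i ∈ Icc 1 N) : s.gcd f ∈ Icc 1 N := by
  obtain ⟨i, hi⟩ := hs
  obtain ⟨hpos, hle⟩ := mem_Icc.1 (hf i hi)
  have hdvd : s.gcd f ∣ f i := gcd_dvd hi
  exact mem_Icc.2 ⟨Nat.pos_of_dvd_of_pos hdvd hpos, (Nat.le_of_dvd hpos hdvd).trans hle⟩

theorem card_nonempty_subsets_gcd_eq_one_eq_sum_moebius {ι : Type*} {s : Finset ι} {f : ι → ℕ}
    {N : ℕ} (hf : ∀ i ∈ s, f i ∈ Icc 1 N) :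
    (#{X ∈ s.powerset | X.Nonempty ∧ X.gcd f = 1} : ℤ)
      = ∑ d ∈ Icc 1 N, μ d * (2 ^ #{i ∈ s | d ∣ f i} - 1) := by
  have gcd_mem : ∀ X ∈ s.powerset.filter Finset.Nonempty, X.gcd f ∈ Icc 1 N := by
    intro X hX
    obtain ⟨hXs, hne⟩ := mem_filter.1 hX
    exact gcd_mem_Icc_one hne fun i hi => hf i (mem_powerset.1 hXs hi)
  rw [← filter_filter, card_filter_eq_one_eq_sum_moebius gcd_mem]
  refine sum_congr rfl fun d _ => ?_
  rw [filter_filter, card_nonempty_subsets_dvd_gcd, Nat.cast_pred (by positivity)]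
  norm_cast

theorem card_filter_dvd_Ioc (a b d : ℕ) : #{x ∈ Ioc a b | d ∣ x} = b / d - a / d := by
  rcases le_total b a with hba | hab
  · rw [Ioc_eq_empty_of_le hba, filter_empty, card_empty,
      Nat.sub_eq_zero_of_le (Nat.div_le_div_right hba)]
  · have split_at : #{x ∈ Ioc 0 a | d ∣ x} + #{x ∈ Ioc a b | d ∣ x} = #{x ∈ Ioc 0 b | d ∣ x} := by
      rw [← Ioc_union_Ioc_eq_Ioc a.zero_le hab, filter_union, card_union_of_disjoint]
      exact disjoint_filter_filter (Ioc_disjoint_Ioc_of_le le_rfl)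
    rw [Nat.Ioc_filter_dvd_card_eq_div, Nat.Ioc_filter_dvd_card_eq_div] at split_at
    exact Nat.eq_sub_of_add_eq' split_at

/-- Corollary (Ayad–Kihel) (a): `f([l,m]) = ∑_{d=1}^{m} μ(d) (2^{⌊m/d⌋ - ⌊(l-1)/d⌋} - 1)`,
where `f(A)` counts the nonempty relatively prime subsets of `A`. -/
theorem stmt_11 (l m : ℕ) (hl : 0 < l) (h : l ≤ m) :
    ((((Finset.Icc l m).powerset).filter
        (fun X : Finset ℕ => X.Nonempty ∧ X.gcd id = 1)).card : ℤ)
      = ∑ d ∈ Finset.Icc 1 m,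
          (ArithmeticFunction.moebius d) * (2 ^ (m / d - (l - 1) / d) - 1) := by
  have Icc_subset : ∀ x ∈ Icc l m, id x ∈ Icc 1 m := Icc_subset_Icc_left hl
  have Icc_eq_Ioc : Icc l m = Ioc (l - 1) m :=
    (Ioc_sub_one_left_eq_Icc_of_not_isMin (not_isMin_of_lt hl) m).symm
  have card_multiples (d : ℕ) : #{x ∈ Icc l m | d ∣ id x} = m / d - (l - 1) / d := by
    rw [Icc_eq_Ioc]
    exact card_filter_dvd_Ioc (l - 1) m d
  rw [card_nonempty_subsets_gcd_eq_one_eq_sum_moebius Icc_subset]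
  simp only [card_multiples]
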